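/- Let the torsion 2-form be T^a = -𝒴 k^a (k♭ ∧ l♭) + [C̃_c{}^a + (C_c - Ã_c)k^a + B δ_c^a] k♭ ∧ θ̃^c, where C̃_{ab} is antisymmetric transversal, C_c, Ã_c are transversal, and 𝒴, B are scalars. Then T^a ∧ ⋆T^b = -𝒴² k^a k^b vol, where vol is the metric volume form; in particular if 𝒴 = 0 then T^a ∧ ⋆T^b = 0 for all a, b. -/

import Mathlib

/-!
Every term of `T^a` contains the factor `k♭`, so `T^a = k♭ ∧ ω^a` with
`ω^a = -𝒴 k^a l♭ + M_c{}^a θ̃^c`, where `M_c{}^a` is the bracketed coefficient. As `k` is null, the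
Gram determinant of `k♭ ∧ ω^a` and `k♭ ∧ ω^b` collapses to `-ω^a(k) ω^b(k)`; since `θ̃^c(k) = 0`
and `l♭(k) = 1`, all that remains of `ω^a(k)` is `-𝒴 k^a`.
-/

open Matrix

section CommSemiring

variable {ι R : Type*} [Fintype ι] [CommSemiring R]

/-- The full contraction `S_{xy} T^{xy}` of two covariant 2-tensors, with indices raised by the
inverse metric `h`. For 2-forms it is twice the induced inner product, since every pair of
indices is counted in both orders. -/
def tensorContract (h S T : Matrix ι ι R) : R :=
  ∑ x, ∑ y, ∑ x', ∑ y', h x x' * h y y' * S x y * T x' y'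

theorem sum_sum_mul_mul_eq_dotProduct_mulVec (h : Matrix ι ι R) (u v : ι → R) :
    ∑ x, ∑ y, h x y * u x * v y = u ⬝ᵥ h *ᵥ v := by
  simp only [dotProduct, mulVec, Finset.mul_sum, mul_assoc, mul_left_comm]

theorem tensorContract_vecMulVec_vecMulVec (h : Matrix ι ι R) (u v u' v' : ι → R) :
    tensorContract h (vecMulVec u v) (vecMulVec u' v') =
      (u ⬝ᵥ h *ᵥ u') * (v ⬝ᵥ h *ᵥ v') := by
  simp only [← sum_sum_mul_mul_eq_dotProduct_mulVec, tensorContract, vecMulVec_apply,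
    Finset.sum_mul_sum]
  refine Finset.sum_congr rfl fun x _ => Finset.sum_congr rfl fun y _ =>
    Finset.sum_congr rfl fun x' _ => Finset.sum_congr rfl fun y' _ => ?_
  ring

theorem dotProduct_mulVec_comm_of_isSymm {h : Matrix ι ι R} (hh : h.IsSymm) (u v : ι → R) :
    u ⬝ᵥ h *ᵥ v = v ⬝ᵥ h *ᵥ u := by
  rw [← dotProduct_transpose_mulVec, hh.eq]

theorem dotProduct_mulVec_smul_add_sum_smul {κ : Type*} [Fintype κ] {h : Matrix ι ι R}
    {k l : ι → R} {θ : κ → ι → R} (hkl : k ⬝ᵥ h *ᵥ l = 1) (hkθ : ∀ c, k ⬝ᵥ h *ᵥ θ c = 0)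
    (s : R) (m : κ → R) : k ⬝ᵥ h *ᵥ (s • l + ∑ c, m c • θ c) = s := by
  simp [mulVec_add, mulVec_smul, mulVec_sum, dotProduct_sum, hkl, hkθ]

theorem isSymm_of_isSymm_of_mul_eq_one [DecidableEq ι] {A B : Matrix ι ι R} (hA : A.IsSymm)
    (hAB : A * B = 1) : B.IsSymm := by
  have hBA : Bᵀ * A = 1 := by rw [← hA.eq, ← transpose_mul, hAB, transpose_one]
  exact left_inv_eq_right_inv hBA hAB

end CommSemiring

section CommRing

variable {ι R : Type*} [CommRing R]

/-- The wedge product `u ∧ v` of two covectors as an antisymmetric matrix of components,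
normalised so that `(u ∧ v)_{xy} = u_x v_y - u_y v_x`. -/
def covectorWedge : (ι → R) →ₗ[R] (ι → R) →ₗ[R] Matrix ι ι R :=
  vecMulVecBilin R R - (vecMulVecBilin R R).flip

theorem covectorWedge_eq_sub (u v : ι → R) :
    covectorWedge u v = vecMulVec u v - vecMulVec v u := rfl

theorem covectorWedge_apply (u v : ι → R) (x y : ι) :
    covectorWedge u v x y = u x * v y - u y * v x := by
  rw [covectorWedge_eq_sub, Matrix.sub_apply, vecMulVec_apply, vecMulVec_apply, mul_comm (v x)]

variable [Fintype ι]

theorem tensorContract_sub_left (h S S' T : Matrix ι ι R) :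
    tensorContract h (S - S') T = tensorContract h S T - tensorContract h S' T := by
  simp only [tensorContract, Matrix.sub_apply, mul_sub, sub_mul, Finset.sum_sub_distrib]

theorem tensorContract_sub_right (h S T T' : Matrix ι ι R) :
    tensorContract h S (T - T') = tensorContract h S T - tensorContract h S T' := by
  simp only [tensorContract, Matrix.sub_apply, mul_sub, Finset.sum_sub_distrib]

theorem tensorContract_covectorWedge_covectorWedge (h : Matrix ι ι R) (u v u' v' : ι → R) :
    tensorContract h (covectorWedge u v) (covectorWedge u' v') =
      2 * ((u ⬝ᵥ h *ᵥ u') * (v ⬝ᵥ h *ᵥ v') - (u ⬝ᵥ h *ᵥ v') * (v ⬝ᵥ h *ᵥ u')) := by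
  simp only [covectorWedge_eq_sub, tensorContract_sub_left, tensorContract_sub_right,
    tensorContract_vecMulVec_vecMulVec]
  ring

theorem tensorContract_covectorWedge_of_null {h : Matrix ι ι R} (hh : h.IsSymm) {k : ι → R}
    (hk : k ⬝ᵥ h *ᵥ k = 0) (α β : ι → R) :
    tensorContract h (covectorWedge k α) (covectorWedge k β) =
      -2 * (k ⬝ᵥ h *ᵥ α) * (k ⬝ᵥ h *ᵥ β) := by
  rw [tensorContract_covectorWedge_covectorWedge, hk, dotProduct_mulVec_comm_of_isSymm hh α k]
  ring

theorem stmt_17_general {κ : Type*} [Fintype κ] (ginv : Matrix ι ι R)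
    (hsymm : ginv.IsSymm) (k l : ι → R)
    (hkk : ∑ a, ∑ b, ginv a b * k a * k b = 0)
    (hkl : ∑ a, ∑ b, ginv a b * k a * l b = 1)
    (kU : ι → R) (hkU : ∀ a, kU a = ∑ b, ginv a b * k b)
    (θ : κ → ι → R) (hθk : ∀ c, ∑ a, kU a * θ c a = 0)
    (M : κ → ι → R) (Y : R) (T : ι → ι → ι → R)
    (hT : ∀ a x y, T a x y =
      -Y * kU a * (k x * l y - k y * l x) + ∑ c, M c a * (k x * θ c y - k y * θ c x))
    (a b : ι) :
    ∑ x, ∑ y, ∑ x', ∑ y', ginv x x' * ginv y y' * T a x y * T b x' y' =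
      -2 * Y ^ 2 * kU a * kU b := by
  rw [sum_sum_mul_mul_eq_dotProduct_mulVec] at hkk hkl
  have hkθ (c : κ) : k ⬝ᵥ ginv *ᵥ θ c = 0 := by
    have hraise : kU = ginv *ᵥ k := funext hkU
    rw [dotProduct_mulVec_comm_of_isSymm hsymm, dotProduct_comm, ← hraise]
    exact hθk c
  have hTwedge (a : ι) :
      T a = covectorWedge k ((-Y * kU a) • l + ∑ c, M c a • θ c) := by
    ext x y
    simp only [map_add, map_smul, map_sum]
    simp only [hT, Matrix.add_apply, Matrix.smul_apply, Matrix.sum_apply, covectorWedge_apply,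
      smul_eq_mul]
  calc
    _ = tensorContract ginv (T a) (T b) := rfl
    _ = -2 * (-Y * kU a) * (-Y * kU b) := by
      rw [hTwedge, hTwedge, tensorContract_covectorWedge_of_null hsymm hkk,
        dotProduct_mulVec_smul_add_sum_smul hkl hkθ, dotProduct_mulVec_smul_add_sum_smul hkl hkθ]
    _ = _ := by ring

end CommRing

/-- For the torsion 2-form
`T^a = -𝒴 k^a k♭∧l♭ + [C̃_c{}^a + (C_c - Ã_c)k^a + Bδ_c^a] k♭∧θ̃^c`,
one has `T^a ∧ ⋆T^b = -𝒴² k^a k^b vol`; stated via the induced inner product of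
2-forms: `⟨T^a, T^b⟩ = ½ T^a_{xy} T^{b xy} = -𝒴² k^a k^b`.  In particular if
`𝒴 = 0` then `T^a ∧ ⋆T^b = 0` for all `a`, `b`. -/
theorem stmt_17 {n : ℕ} (g ginv : Fin n → Fin n → ℝ)
    (hgs : ∀ a b, g a b = g b a)
    (hinv : ∀ a b, ∑ c, g a c * ginv c b = if a = b then 1 else 0)
    (k l : Fin n → ℝ)
    (hkk : ∑ a, ∑ b, ginv a b * k a * k b = 0)
    (hll : ∑ a, ∑ b, ginv a b * l a * l b = 0)
    (hkl : ∑ a, ∑ b, ginv a b * k a * l b = 1)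
    (kU lU : Fin n → ℝ)
    (hkU : ∀ a, kU a = ∑ b, ginv a b * k b)
    (hlU : ∀ a, lU a = ∑ b, ginv a b * l b)
    (θ : Fin n → Fin n → ℝ)                    -- transversal coframe θ̃^c
    (hθk : ∀ c, ∑ a, kU a * θ c a = 0)
    (hθl : ∀ c, ∑ a, lU a * θ c a = 0)
    (Ct : Fin n → Fin n → ℝ)                    -- C̃_c{}^a, transversal
    (hCt1 : ∀ a, ∑ c, kU c * Ct c a = 0) (hCt2 : ∀ a, ∑ c, lU c * Ct c a = 0)
    (hCt3 : ∀ c, ∑ a, k a * Ct c a = 0) (hCt4 : ∀ c, ∑ a, l a * Ct c a = 0)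
    (Cc At : Fin n → ℝ)                         -- C_c, Ã_c, transversal
    (hCc1 : ∑ c, kU c * Cc c = 0) (hCc2 : ∑ c, lU c * Cc c = 0)
    (hAt1 : ∑ c, kU c * At c = 0) (hAt2 : ∑ c, lU c * At c = 0)
    (Y B : ℝ)
    (T : Fin n → Fin n → Fin n → ℝ)
    (hT : ∀ a x y, T a x y =
      -Y * kU a * (k x * l y - k y * l x) +
      ∑ c, (Ct c a + (Cc c - At c) * kU a + B * (if c = a then 1 else 0)) *
        (k x * θ c y - k y * θ c x)) :
    (∀ a b, (1 / 2) * ∑ x, ∑ y, ∑ x', ∑ y',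
        ginv x x' * ginv y y' * T a x y * T b x' y' = -(Y ^ 2) * kU a * kU b) ∧
    (Y = 0 → ∀ a b, (1 / 2) * ∑ x, ∑ y, ∑ x', ∑ y',
        ginv x x' * ginv y y' * T a x y * T b x' y' = 0) := by
  have hsymm := isSymm_of_isSymm_of_mul_eq_one (IsSymm.ext fun a b => hgs b a) (Matrix.ext hinv)
  have key := stmt_17_general ginv hsymm k l hkk hkl kU hkU θ hθk _ Y T hT
  exact ⟨fun a b => by linear_combination (1 / 2) * key a b, fun hY a b => by simp [key, hY]⟩
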